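/- Let (λ,μ) and (λ',μ') be bipartitions of n with (λ',μ') ⊴ (λ,μ) in the bidominance order. Then I_{(λ',μ')} ⊆ I_{(λ,μ)}. -/

import Mathlib

/-!
A filling of a pair of Young diagrams matters for its `B_n`-Specht polynomial only through the
partition of `{1, …, n}` into columns, each lying on the left or on the right. It is convenient to
allow arbitrary colourings by column labels (`colPoly`); the polynomial of a colouring whose
classes have the column heights of `(λ, μ)` is a `B_n`-Specht polynomial of shape `(λ, μ)` up to
sign.

Encode the shape by the interlaced sequence `λ₁, μ₁, λ₂, μ₂, …`. Bidominance is exactly dominance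
of these sequences, which are weakly decreasing along even and along odd positions. A column of
height `h` on side `s ∈ {0, 1}` contributes to the interlaced positions `s, s + 2, …` below its
"top" `2h + s`.

The algebraic input is `exchange`. Let `A` and `B` be two colour classes, `A` the larger one, and
`f = Y^δ ∏_{b ∈ B} (Y - x_b²)` of degree `p = |A| - j`. The Vandermonde determinant `Δ_A(x²)` may
be computed with columns `1, Y, …, Y^(p-1), f, f Y, …, f Y^(j-1)`, and Laplace expansion along the
last `j` columns gives, after multiplication by `p! j!`, a sum of terms
`± Δ_{A \ D} Δ_D ∏_{s ∈ D} f(x_s²)` with `D ⊆ A`, `|D| = j`. Multiplying by `Δ_B` and by the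
other factors, each term is a multiple of the polynomial of the colouring in which `D` has been
moved from `A` to `B`. So, in characteristic zero, if all those polynomials lie in an ideal, the
original one does as well.

The combinatorial input is `exists_move`: if a sequence is strictly dominated by another one, some
pair of columns can be modified, by moving one cell when they have tops of equal parity and by
swapping tails when the parities differ, so that the new sequence is larger and still dominated.
The sum of the squares of the tops drops, hence an induction (`mem_of_dominated`) ends at the
dominating sequence, where the polynomials are generators of the ideal.
-/

namespace SpechtBn

/-- `f` lists the parts of a partition (0-indexed: part `j+1` of the paper is `f j`),
with at most `n` parts. -/
def IsPartitionFun (n : ℕ) (f : ℕ → ℕ) : Prop :=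
  Antitone f ∧ ∀ i, n ≤ i → f i = 0

/-- the pair of part functions `(f, g)` forms a bipartition of `n`. -/
def IsBP (n : ℕ) (f g : ℕ → ℕ) : Prop :=
  IsPartitionFun n f ∧ IsPartitionFun n g ∧ (∑ i ∈ Finset.range n, (f i + g i)) = n

/-- A bipartition of `n`, given by the 0-indexed part functions of its two components. -/
structure Bipartition (n : ℕ) where
  l : ℕ → ℕ
  m : ℕ → ℕ
  isBP : IsBP n l m

/-- Bidominance on pairs of part functions: `(l₁,m₁) ⊴ (l₂,m₂)`. -/
def BidomFun (l₁ m₁ l₂ m₂ : ℕ → ℕ) : Prop :=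
  (∀ k, ∑ j ∈ Finset.range k, (l₁ j + m₁ j) ≤ ∑ j ∈ Finset.range k, (l₂ j + m₂ j)) ∧
  (∀ k, (∑ j ∈ Finset.range k, (l₁ j + m₁ j)) + l₁ k
      ≤ (∑ j ∈ Finset.range k, (l₂ j + m₂ j)) + l₂ k)

/-- `Bidom q p` : the bipartition `q` is bidominated by `p`, i.e. `q ⊴ p`. -/
def Bidom {n : ℕ} (q p : Bipartition n) : Prop := BidomFun q.l q.m p.l p.m

/-- Dominance order on part functions: `DomFun f g` means `f ⊴ g`. -/
def DomFun (f g : ℕ → ℕ) : Prop :=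
  ∀ k, ∑ j ∈ Finset.range k, f j ≤ ∑ j ∈ Finset.range k, g j

/-- `g` covers `f` in the dominance order on partitions (of the same size, with ≤ `n` parts). -/
def DomCovers (n : ℕ) (g f : ℕ → ℕ) : Prop :=
  IsPartitionFun n g ∧ IsPartitionFun n f ∧ DomFun f g ∧ f ≠ g ∧
  ∀ h : ℕ → ℕ, IsPartitionFun n h →
    (∑ j ∈ Finset.range n, h j) = (∑ j ∈ Finset.range n, f j) →
    DomFun f h → DomFun h g → h = f ∨ h = g

/-- `p` covers `q` in the bidominance order on bipartitions of `n`. -/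
def BPCovers {n : ℕ} (p q : Bipartition n) : Prop :=
  Bidom q p ∧ q ≠ p ∧ ∀ r : Bipartition n, Bidom q r → Bidom r p → r = q ∨ r = p

/-- number of positive parts of `f` (among the first `n`). -/
def lenF (n : ℕ) (f : ℕ → ℕ) : ℕ := ((Finset.range n).filter fun i => 1 ≤ f i).card

/-- the cells `(row, column)` of the Young diagram of `f` (0-indexed). -/
def cellsF (n : ℕ) (f : ℕ → ℕ) : Finset (ℕ × ℕ) :=
  (Finset.range n ×ˢ Finset.range n).filter fun c => c.2 < f c.1

/-- ordered pairs of cells lying in the same column, the first strictly above the second. -/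
def colPairs (n : ℕ) (f : ℕ → ℕ) : Finset ((ℕ × ℕ) × (ℕ × ℕ)) :=
  ((cellsF n f) ×ˢ (cellsF n f)).filter fun q => q.1.2 = q.2.2 ∧ q.1.1 < q.2.1

/-- A bitableau of shape `(f,g)`: a filling of the pair of Young diagrams with the
numbers `1,…,n` (here: the elements of `Fin n`), each used exactly once. -/
structure Bitableau (n : ℕ) (f g : ℕ → ℕ) where
  left : ℕ × ℕ → Fin n
  right : ℕ × ℕ → Fin n
  bij : ∀ k : Fin n, ∃! c : (ℕ × ℕ) ⊕ (ℕ × ℕ),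
      Sum.elim (fun c => c ∈ cellsF n f ∧ left c = k)
               (fun c => c ∈ cellsF n g ∧ right c = k) c

/-- A tableau of shape `f`: a filling of the Young diagram of `f` with the elements
of `Fin n`, each used exactly once. -/
structure Tableau (n : ℕ) (f : ℕ → ℕ) where
  entry : ℕ × ℕ → Fin n
  bij : ∀ k : Fin n, ∃! c : ℕ × ℕ, c ∈ cellsF n f ∧ entry c = k

open MvPolynomial in
/-- The `B_n`-Specht polynomial of a bitableau. -/
noncomputable def speB (n : ℕ) (K : Type*) [CommRing K] {f g : ℕ → ℕ}
    (bt : Bitableau n f g) : MvPolynomial (Fin n) K :=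
  (∏ q ∈ colPairs n f, (X (bt.left q.1) ^ 2 - X (bt.left q.2) ^ 2)) *
  (∏ q ∈ colPairs n g, (X (bt.right q.1) ^ 2 - X (bt.right q.2) ^ 2)) *
  ∏ c ∈ cellsF n g, X (bt.right c)

open MvPolynomial in
/-- The `S_n`-Specht polynomial of a tableau. -/
noncomputable def speSn (n : ℕ) (K : Type*) [CommRing K] {f : ℕ → ℕ}
    (U : Tableau n f) : MvPolynomial (Fin n) K :=
  ∏ q ∈ colPairs n f, (X (U.entry q.1) - X (U.entry q.2))

/-- The set of all `B_n`-Specht polynomials of shape `(f,g)`. -/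
def spechtSet (n : ℕ) (K : Type*) [CommRing K] (f g : ℕ → ℕ) :
    Set (MvPolynomial (Fin n) K) :=
  {P | ∃ bt : Bitableau n f g, P = speB n K bt}

/-- The `B_n`-Specht ideal of shape `(f,g)`. -/
noncomputable def spechtIdeal (n : ℕ) (K : Type*) [CommRing K] (f g : ℕ → ℕ) :
    Ideal (MvPolynomial (Fin n) K) :=
  Ideal.span (spechtSet n K f g)

/-- The `B_n`-Specht variety of shape `(f,g)`. -/
def spechtVariety (n : ℕ) (K : Type*) [CommRing K] (f g : ℕ → ℕ) : Set (Fin n → K) :=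
  {z | ∀ P ∈ spechtIdeal n K f g, MvPolynomial.eval z P = 0}

/-- The `S_n`-orbit type of `z`: the multiplicities of the distinct values occurring among
the coordinates of `z`, sorted decreasingly (0-indexed part function). -/
noncomputable def snType {K : Type*} {n : ℕ} (z : Fin n → K) : ℕ → ℕ := fun j =>
  letI := Classical.decEq K
  (((Finset.univ.image z).val.map fun v =>
      (Finset.univ.filter fun i => z i = v).card).sort (· ≤ ·)).reverse.getD j 0

/-- The index `j-1` (0-indexed) used in the definition of the `t`-cut. -/
def cutIdx (n : ℕ) (f : ℕ → ℕ) (t : ℕ) : ℕ :=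
  ((Finset.range n).filter fun i => t ≤ f i ∧ 1 ≤ f i).card

/-- First component `ρ` of the `t`-cut of `f`. -/
def cutFst (n : ℕ) (f : ℕ → ℕ) (t : ℕ) : ℕ → ℕ :=
  fun i => if i < cutIdx n f t then t else f i

/-- Second component `σ` of the `t`-cut of `f`. -/
def cutSnd (n : ℕ) (f : ℕ → ℕ) (t : ℕ) : ℕ → ℕ :=
  fun i => if i < cutIdx n f t then f i - t else 0

/-- the number of zero coordinates of `z`. -/
noncomputable def zeroCount {K : Type*} [Zero K] {n : ℕ} (z : Fin n → K) : ℕ :=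
  letI := Classical.decEq K
  (Finset.univ.filter fun i => z i = 0).card

/-- First component of the `B_n`-orbit type `Ω(z) = cut(Λ(z²), t_z)`. -/
noncomputable def omegaFst {K : Type*} [CommRing K] {n : ℕ} (z : Fin n → K) : ℕ → ℕ :=
  cutFst n (snType fun i => z i ^ 2) (zeroCount z)

/-- Second component of the `B_n`-orbit type `Ω(z) = cut(Λ(z²), t_z)`. -/
noncomputable def omegaSnd {K : Type*} [CommRing K] {n : ℕ} (z : Fin n → K) : ℕ → ℕ :=
  cutSnd n (snType fun i => z i ^ 2) (zeroCount z)

/-- The `B_n`-orbit set `H_{(f,g)}`. -/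
def orbitSet (n : ℕ) (K : Type*) [CommRing K] (f g : ℕ → ℕ) : Set (Fin n → K) :=
  {z | omegaFst z = f ∧ omegaSnd z = g}

/-- `τ` is a vector of signs. -/
def IsSigns {n : ℕ} {K : Type*} [One K] [Neg K] (τ : Fin n → K) : Prop :=
  ∀ i, τ i = 1 ∨ τ i = -1

/-- The action of the element `(τ, ρ)` of the hyperoctahedral group `B_n` on polynomials,
sending `x_i` to `τ(ρ(i))·x_{ρ(i)}`. -/
noncomputable def bnAct (n : ℕ) (K : Type*) [CommRing K] (τ : Fin n → K)
    (ρ : Equiv.Perm (Fin n)) :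
    MvPolynomial (Fin n) K →ₐ[K] MvPolynomial (Fin n) K :=
  MvPolynomial.aeval fun i => MvPolynomial.C (τ (ρ i)) * MvPolynomial.X (ρ i)

/-- `I` is a `B_n`-invariant ideal. -/
def BnInvariantIdeal (n : ℕ) (K : Type*) [CommRing K]
    (I : Ideal (MvPolynomial (Fin n) K)) : Prop :=
  ∀ P ∈ I, ∀ τ : Fin n → K, IsSigns τ → ∀ ρ : Equiv.Perm (Fin n), bnAct n K τ ρ P ∈ I

/-- `P` is a `B_n`-invariant polynomial. -/
def BnInvariantPoly (n : ℕ) (K : Type*) [CommRing K] (P : MvPolynomial (Fin n) K) : Prop :=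
  ∀ τ : Fin n → K, IsSigns τ → ∀ ρ : Equiv.Perm (Fin n), bnAct n K τ ρ P = P

/-- the decreasing rearrangement of a multiset of naturals, as a 0-indexed part function. -/
def sortedDesc (M : Multiset ℕ) : ℕ → ℕ := fun j => ((M.sort (· ≤ ·)).reverse).getD j 0

/-- the conjugate (transpose) of the part function `f` (with at most `n` parts). -/
def conjF (n : ℕ) (f : ℕ → ℕ) : ℕ → ℕ :=
  fun c => ((Finset.range n).filter fun i => c < f i).card

/-- indices with positive even exponent in the monomial with exponent vector `e`. -/
def evenSupp {n : ℕ} (e : Fin n →₀ ℕ) : Finset (Fin n) :=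
  Finset.univ.filter fun i => e i ≠ 0 ∧ Even (e i)

/-- indices with odd exponent in the monomial with exponent vector `e`. -/
def oddSupp {n : ℕ} (e : Fin n →₀ ℕ) : Finset (Fin n) :=
  Finset.univ.filter fun i => Odd (e i)

/-- `d₁ = Σ_{i∈I₁} k_i` for the monomial with exponent vector `e`. -/
def d1F {n : ℕ} (e : Fin n →₀ ℕ) : ℕ := ∑ i ∈ evenSupp e, e i / 2

/-- `d₂ = Σ_{i∈I₂} r_i` for the monomial with exponent vector `e`. -/
def d2F {n : ℕ} (e : Fin n →₀ ℕ) : ℕ := ∑ i ∈ oddSupp e, e i / 2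

/-- first component of the bipartition `Γ(m)` of the monomial with exponent vector `e`:
`(λ₁+1,…,λ_ℓ+1, 1,…,1)` with `n−(ℓ+s+d₁+d₂)` trailing ones. -/
def gammaFst {n : ℕ} (e : Fin n →₀ ℕ) : ℕ → ℕ := fun j =>
  if j < n - ((oddSupp e).card + d1F e + d2F e) then
    max (sortedDesc ((evenSupp e).val.map fun i => e i / 2 + 1) j) 1
  else 0

/-- second component of the bipartition `Γ(m)`: `(μ₁+1,…,μ_s+1)`. -/
def gammaSnd {n : ℕ} (e : Fin n →₀ ℕ) : ℕ → ℕ :=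
  sortedDesc ((oddSupp e).val.map fun i => e i / 2 + 1)

/-- first component of `Γ*(m)`, the conjugate of the first component of `Γ(m)`. -/
def gammaStarFst {n : ℕ} (e : Fin n →₀ ℕ) : ℕ → ℕ := conjF n (gammaFst e)

/-- second component of `Γ*(m)`, the conjugate of the second component of `Γ(m)`. -/
def gammaStarSnd {n : ℕ} (e : Fin n →₀ ℕ) : ℕ → ℕ := conjF n (gammaSnd e)

/-- position, in the glued tableau, of column `j` of the left diagram: columns are sorted
by weakly decreasing height, left-diagram columns first among equal heights. -/
def gluePosL (n : ℕ) (f g : ℕ → ℕ) (j : ℕ) : ℕ :=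
  j + ((Finset.range n).filter fun k => conjF n f j < conjF n g k).card

/-- position, in the glued tableau, of column `k` of the right diagram. -/
def gluePosR (n : ℕ) (f g : ℕ → ℕ) (k : ℕ) : ℕ :=
  k + ((Finset.range n).filter fun j => conjF n g k ≤ conjF n f j).card

/-- `U` is the glueing `T ⊎ S` of the bitableau `(T,S)`. -/
def IsGlue {n : ℕ} {f g : ℕ → ℕ} (bt : Bitableau n f g)
    (U : Tableau n (fun i => f i + g i)) : Prop :=
  (∀ c ∈ cellsF n f, U.entry (c.1, gluePosL n f g c.2) = bt.left c) ∧
  (∀ c ∈ cellsF n g, U.entry (c.1, gluePosR n f g c.2) = bt.right c)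

/-- extension of a finitely-presented part function to `ℕ → ℕ`. -/
def extendF {n : ℕ} (h : Fin n → Fin (n + 1)) : ℕ → ℕ :=
  fun i => if hi : i < n then (h ⟨i, hi⟩ : ℕ) else 0

/-- `Σ_{(ϑ,ω)∈BP_n, (ϑ,ω) ⋬ (lam,mu)} s_{ϑ,ω}²`, where `s_{ϑ,ω}` is the dimension of the
span of the Specht polynomials of shape `(ϑ,ω)`. -/
noncomputable def sBound (n : ℕ) (K : Type*) [Field K] (lam mu : ℕ → ℕ) : ℕ :=
  letI : DecidablePred (fun q : (Fin n → Fin (n + 1)) × (Fin n → Fin (n + 1)) =>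
      IsBP n (extendF q.1) (extendF q.2) ∧
        ¬ BidomFun (extendF q.1) (extendF q.2) lam mu) :=
    Classical.decPred _
  ∑ q ∈ Finset.univ.filter (fun q : (Fin n → Fin (n + 1)) × (Fin n → Fin (n + 1)) =>
      IsBP n (extendF q.1) (extendF q.2) ∧
        ¬ BidomFun (extendF q.1) (extendF q.2) lam mu),
    (Module.finrank K (Submodule.span K (spechtSet n K (extendF q.1) (extendF q.2)))) ^ 2

end SpechtBn

namespace SpechtBn

/-! ### Products over unordered pairs and Laplace expansion -/

/-- Comparison of two products over the same set of unordered pairs. `T₁` selects one ordering of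
each pair, `T₂` indexes the pairs with possibly different orderings; if reversing a pair changes
the factor `g` by a unit only, then the products are associated. All signs of Vandermonde
products are handled through this lemma. -/
theorem orient_prod {α ι R : Type*} [DecidableEq α] [CommRing R]
    (T₁ : Finset (α × α)) (T₂ : Finset ι) (e₁ e₂ : ι → α) (g : α × α → R)
    (hg : ∀ p, Associated (g p) (g p.swap))
    (hasym : ∀ p ∈ T₁, p.swap ∉ T₁)
    (hmaps : ∀ q ∈ T₂, (e₁ q, e₂ q) ∈ T₁ ∨ (e₂ q, e₁ q) ∈ T₁)
    (hinj : ∀ q ∈ T₂, ∀ q' ∈ T₂,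
      ((e₁ q = e₁ q' ∧ e₂ q = e₂ q') ∨ (e₁ q = e₂ q' ∧ e₂ q = e₁ q')) → q = q')
    (hsurj : ∀ p ∈ T₁, ∃ q ∈ T₂, (e₁ q, e₂ q) = p ∨ (e₂ q, e₁ q) = p) :
    Associated (∏ q ∈ T₂, g (e₁ q, e₂ q)) (∏ p ∈ T₁, g p) := by
  have h : ∏ q ∈ T₂, g (if (e₁ q, e₂ q) ∈ T₁ then (e₁ q, e₂ q) else (e₂ q, e₁ q))
      = ∏ p ∈ T₁, g p := by
    refine Finset.prod_bij
      (fun q _ => if (e₁ q, e₂ q) ∈ T₁ then (e₁ q, e₂ q) else (e₂ q, e₁ q))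
      ?_ ?_ ?_ (fun _ _ => rfl)
    · intro q hq
      have := hmaps q hq
      split_ifs <;> tauto
    · intro q hq q' hq' h
      apply hinj q hq q' hq'
      split_ifs at h <;> simp only [Prod.mk.injEq] at h <;> tauto
    · intro p hp
      obtain ⟨q, hq, rfl | rfl⟩ := hsurj p hp
      · exact ⟨q, hq, by simp [hp]⟩
      · refine ⟨q, hq, ?_⟩
        have := hasym _ hp
        simp only [Prod.swap_prod_mk] at this
        simp [this]
  rw [← h]
  refine Associated.prod _ _ _ fun q _ => ?_
  split_ifs
  · rfl
  · exact hg _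

/-- Laplace expansion along a block of columns, written as a sum over all permutations rather
than over subsets of rows: every subset is hit `m! k!` times. -/
theorem sum_sign_det_mul_det {m k R : Type*} [Fintype m] [DecidableEq m] [Fintype k]
    [DecidableEq k] [CommRing R] (M : Matrix (m ⊕ k) (m ⊕ k) R) :
    ∑ σ : Equiv.Perm (m ⊕ k), ((Equiv.Perm.sign σ : ℤ) : R) *
      ((Matrix.of fun i j => M (σ (Sum.inl i)) (Sum.inl j)).det *
        (Matrix.of fun i j => M (σ (Sum.inr i)) (Sum.inr j)).det)
      = ((Fintype.card m).factorial * (Fintype.card k).factorial : ℕ) * M.det := by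
  have hτ : ∀ τ : Equiv.Perm m × Equiv.Perm k,
      ∑ σ : Equiv.Perm (m ⊕ k), ((Equiv.Perm.sign σ : ℤ) : R) *
        ((((Equiv.Perm.sign τ.1 : ℤ) : R) * ∏ i, M (σ (Sum.inl (τ.1 i))) (Sum.inl i)) *
        (((Equiv.Perm.sign τ.2 : ℤ) : R) * ∏ i, M (σ (Sum.inr (τ.2 i))) (Sum.inr i)))
      = M.det := by
    intro τ
    rw [Matrix.det_apply']
    refine Eq.trans ?_ (Equiv.sum_comp (Equiv.mulRight (Equiv.sumCongr τ.1 τ.2)) _)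
    refine Finset.sum_congr rfl fun σ _ => ?_
    have hs : Equiv.Perm.sign (Equiv.sumCongr τ.1 τ.2 : Equiv.Perm (m ⊕ k))
        = Equiv.Perm.sign τ.1 * Equiv.Perm.sign τ.2 := Equiv.Perm.sign_sumCongr _ _
    simp only [Equiv.coe_mulRight, Equiv.Perm.sign_mul, hs, Fintype.prod_sum_type,
      Equiv.Perm.mul_apply, Equiv.sumCongr_apply, Sum.map_inl, Sum.map_inr, Units.val_mul,
      Int.cast_mul]
    ring
  have h2 := Finset.sum_congr (rfl : (Finset.univ : Finset (Equiv.Perm m × Equiv.Perm k)) = _)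
    fun τ _ => hτ τ
  rw [Finset.sum_comm] at h2
  simp only [Finset.sum_const, Finset.card_univ, Fintype.card_prod, Fintype.card_perm,
    nsmul_eq_mul] at h2
  rw [← h2]
  refine Finset.sum_congr rfl fun σ _ => ?_
  rw [← Finset.mul_sum, Matrix.det_apply', Matrix.det_apply', Finset.sum_mul_sum,
    ← Finset.univ_product_univ, Finset.sum_product]
  rfl

/-- The Vandermonde product `∏ (y s - y t)` over `s < t` in `S`. -/
noncomputable def vand {n : ℕ} {R : Type*} [CommRing R] (y : Fin n → R)
    (S : Finset (Fin n)) : R :=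
  ∏ p ∈ (S ×ˢ S).filter (fun p => p.1 < p.2), (y p.1 - y p.2)

theorem associated_sub_swap {α R : Type*} [CommRing R] (y : α → R) (p : α × α) :
    Associated (y p.1 - y p.2) (y p.swap.1 - y p.swap.2) :=
  ⟨-1, by simp⟩

theorem vand_enum {n a : ℕ} {R : Type*} [CommRing R] (y : Fin n → R)
    (e : Fin a → Fin n) (he : Function.Injective e) :
    Associated (Matrix.vandermonde (fun i => y (e i))).det (vand y (Finset.univ.image e)) := by
  have h1 : (Matrix.vandermonde (fun i => y (e i))).det
      = ∏ q ∈ (Finset.univ : Finset (Fin a × Fin a)).filter (fun q => q.2 < q.1),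
        (y (e q.1) - y (e q.2)) := by
    rw [Matrix.det_vandermonde, Finset.prod_filter, ← Finset.univ_product_univ,
      Finset.prod_product_right]
    refine Finset.prod_congr rfl fun i _ => ?_
    rw [← Finset.prod_filter]
    refine Finset.prod_congr ?_ fun _ _ => rfl
    ext; simp
  rw [h1]
  refine orient_prod _ _ (fun q : Fin a × Fin a => e q.1) (fun q : Fin a × Fin a => e q.2)
    (fun p => y p.1 - y p.2) (associated_sub_swap y) ?_ ?_ ?_ ?_
  · rintro ⟨a, b⟩ h
    simp only [Finset.mem_filter, Finset.mem_product, Prod.swap] at h ⊢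
    exact fun h' => absurd h.2 (not_lt.2 h'.2.le)
  · rintro ⟨a, b⟩ h
    simp only [Finset.mem_filter, Finset.mem_univ, true_and] at h
    simpa using (he.ne h.ne').lt_or_gt
  · rintro ⟨a, b⟩ h ⟨c, d⟩ h' H
    simp only [Finset.mem_filter, Finset.mem_univ, true_and, he.eq_iff] at h h' H
    rcases H with ⟨rfl, rfl⟩ | ⟨rfl, rfl⟩
    · rfl
    · exact absurd h (not_lt.2 h'.le)
  · rintro ⟨a, b⟩ h
    simp only [Finset.mem_filter, Finset.mem_product, Finset.mem_image, Finset.mem_univ,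
      true_and] at h
    obtain ⟨⟨⟨i, rfl⟩, ⟨k, rfl⟩⟩, h⟩ := h
    have hne : i ≠ k := fun h' => by subst h'; exact lt_irrefl _ h
    rcases hne.lt_or_gt with h' | h'
    · exact ⟨(k, i), by simp [h'], Or.inr rfl⟩
    · exact ⟨(i, k), by simp [h'], Or.inl rfl⟩

/-- `Δ_S · Δ_T · ∏_{s ∈ S, t ∈ T} (y s - y t) = ± Δ_{S ∪ T}` for disjoint `S`, `T`. -/
theorem vand_union {n : ℕ} {R : Type*} [CommRing R] (y : Fin n → R)
    (S T : Finset (Fin n)) (h : Disjoint S T) :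
    Associated (vand y S * vand y T * ∏ s ∈ S, ∏ t ∈ T, (y s - y t)) (vand y (S ∪ T)) := by
  have hST : ∀ x, x ∈ S → x ∈ T → False := fun x h1 h2 => Finset.disjoint_left.1 h h1 h2
  have h1 : vand y S * vand y T * ∏ s ∈ S, ∏ t ∈ T, (y s - y t)
      = ∏ q ∈ ((S ×ˢ S).filter (fun p => p.1 < p.2) ∪ (T ×ˢ T).filter (fun p => p.1 < p.2))
        ∪ S ×ˢ T, (y q.1 - y q.2) := by
    rw [Finset.prod_union, Finset.prod_union, Finset.prod_product]
    · rfl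
    · rw [Finset.disjoint_left]
      simp only [Finset.mem_filter, Finset.mem_product]
      exact fun q h1 h2 => hST _ h1.1.1 h2.1.1
    · rw [Finset.disjoint_left]
      simp only [Finset.mem_filter, Finset.mem_product, Finset.mem_union]
      rintro q (h1 | h1) h2
      · exact hST _ h1.1.2 h2.2
      · exact hST _ h2.1 h1.1.1
  rw [h1]
  refine orient_prod _ _ (fun q : Fin n × Fin n => q.1) (fun q : Fin n × Fin n => q.2)
    (fun p => y p.1 - y p.2) (associated_sub_swap y) ?_ ?_ ?_ ?_
  · rintro ⟨a, b⟩ h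
    simp only [Finset.mem_filter, Finset.mem_product, Prod.swap] at h ⊢
    exact fun h' => absurd h.2 (not_lt.2 h'.2.le)
  · rintro ⟨a, b⟩ h
    simp only [Finset.mem_filter, Finset.mem_product, Finset.mem_union] at h ⊢
    rcases h with (h | h) | h
    · tauto
    · tauto
    · have : a ≠ b := by rintro rfl; exact hST _ h.1 h.2
      rcases this.lt_or_gt with h' | h' <;> tauto
  · rintro ⟨a, b⟩ h ⟨c, d⟩ h' H
    simp only [Finset.mem_filter, Finset.mem_product, Finset.mem_union] at h h' H
    rcases H with ⟨rfl, rfl⟩ | ⟨rfl, rfl⟩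
    · rfl
    · exfalso
      have := hST a
      have := hST b
      have : a < b → ¬ b < a := fun h => not_lt.2 h.le
      tauto
  · rintro ⟨a, b⟩ h
    simp only [Finset.mem_filter, Finset.mem_product, Finset.mem_union] at h
    obtain ⟨⟨ha | ha, hb | hb⟩, h⟩ := h
    · exact ⟨(a, b), by simp [ha, hb, h], Or.inl rfl⟩
    · exact ⟨(a, b), by simp [ha, hb], Or.inl rfl⟩
    · exact ⟨(b, a), by simp [ha, hb], Or.inr rfl⟩
    · exact ⟨(a, b), by simp [ha, hb, h], Or.inl rfl⟩

/-- A Vandermonde determinant is unchanged when its columns `v^0, …, v^(p+j-1)` are replaced by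
`v^0, …, v^(p-1), f(v) v^0, …, f(v) v^(j-1)` for a monic `f` of degree `p`: the `l`-th column is
still a monic polynomial of degree `l` evaluated at `v`. -/
theorem det_vandermonde_split {p j : ℕ} {R : Type*} [CommRing R] [Nontrivial R]
    (v : Fin p ⊕ Fin j → R) (f : Polynomial R) (hf : f.Monic) (hdeg : f.natDegree = p) :
    (Matrix.vandermonde (fun i => v (finSumFinEquiv.symm i))).det
      = (Matrix.of fun (r k : Fin p ⊕ Fin j) =>
          Sum.elim (fun k : Fin p => v r ^ (k : ℕ)) (fun k : Fin j => f.eval (v r) * v r ^ (k : ℕ)) k).det := by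
  rw [Matrix.det_eval_matrixOfPolynomials_eq_det_vandermonde _
    (fun i => Sum.elim (fun k : Fin p => Polynomial.X ^ (k : ℕ))
      (fun k : Fin j => f * Polynomial.X ^ (k : ℕ)) (finSumFinEquiv.symm i))]
  · rw [← Matrix.det_submatrix_equiv_self finSumFinEquiv.symm]
    congr 1
    ext r k
    simp only [Matrix.of_apply, Matrix.submatrix_apply]
    rcases finSumFinEquiv.symm k with k | k <;> simp
  · intro i
    obtain ⟨i, rfl⟩ := finSumFinEquiv.surjective i
    rcases i with i | i
    · simp
    · simp [hf.natDegree_mul (Polynomial.monic_X_pow _), hdeg]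
  · intro i
    obtain ⟨i, rfl⟩ := finSumFinEquiv.surjective i
    rcases i with i | i
    · simp [Polynomial.monic_X_pow]
    · simpa using hf.mul (Polynomial.monic_X_pow _)

/-! ### Colouring polynomials and the exchange lemma -/

section
open MvPolynomial

/-- The polynomial `∏ (x_s² - x_t²) · ∏ x_s ^ side (col s)` of a colouring `col`, where the first
product runs over the pairs `s < t` with the same colour. When colours are the columns of a
bitableau, with `side = 0` for the left diagram and `side = 1` for the right one, this is its
`B_n`-Specht polynomial up to sign. -/
noncomputable def colPoly {n : ℕ} (K : Type*) [Field K] {L : Type*} [DecidableEq L] (side : L → ℕ)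
    (col : Fin n → L) : MvPolynomial (Fin n) K :=
  (∏ p ∈ (Finset.univ : Finset (Fin n × Fin n)).filter
      (fun p => p.1 < p.2 ∧ col p.1 = col p.2), (X p.1 ^ 2 - X p.2 ^ 2)) *
    ∏ s, X s ^ side (col s)

/-- Isolates the contribution of two colour classes `α`, `β` in `colPoly`. -/
theorem colPoly_split {n : ℕ} (K : Type*) [Field K] {L : Type*} [DecidableEq L] (side : L → ℕ)
    (col : Fin n → L) {α β : L} (h : α ≠ β) :
    colPoly K side col = vand (fun s => (X s : MvPolynomial (Fin n) K) ^ 2) (Finset.univ.filter (col · = α)) *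
      vand (fun s => (X s : MvPolynomial (Fin n) K) ^ 2) (Finset.univ.filter (col · = β)) *
      (∏ p ∈ (Finset.univ : Finset (Fin n × Fin n)).filter
      (fun p => p.1 < p.2 ∧ col p.1 = col p.2 ∧ col p.1 ≠ α ∧ col p.1 ≠ β), (X p.1 ^ 2 - X p.2 ^ 2)) *
      ∏ s, X s ^ side (col s) := by
  unfold colPoly vand
  rw [← Finset.prod_union, ← Finset.prod_union]
  · congr 2
    ext p
    simp only [Finset.mem_filter, Finset.mem_union, Finset.mem_product, Finset.mem_univ, true_and]
    constructor
    · rintro ⟨h1, h2⟩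
      by_cases hα : col p.1 = α
      · exact Or.inl (Or.inl ⟨⟨hα, h2 ▸ hα⟩, h1⟩)
      · by_cases hβ : col p.1 = β
        · exact Or.inl (Or.inr ⟨⟨hβ, h2 ▸ hβ⟩, h1⟩)
        · exact Or.inr ⟨h1, h2, hα, hβ⟩
    · rintro ((h1 | h1) | h1)
      · exact ⟨h1.2, h1.1.1.trans h1.1.2.symm⟩
      · exact ⟨h1.2, h1.1.1.trans h1.1.2.symm⟩
      · exact ⟨h1.1, h1.2.1⟩
  · rw [Finset.disjoint_left]
    simp only [Finset.mem_filter, Finset.mem_union, Finset.mem_product, Finset.mem_univ, true_and]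
    tauto
  · rw [Finset.disjoint_left]
    simp only [Finset.mem_filter, Finset.mem_product, Finset.mem_univ, true_and]
    rintro p ⟨⟨h1, _⟩, _⟩ ⟨⟨h2, _⟩, _⟩
    exact h (h1.symm.trans h2)

/-- Exchange lemma. If the colour class `A` of `α` is larger than the class `B` of `β` and all
colourings obtained by moving a `j`-element subset `D ⊆ A` to `β` have their polynomial in `J`,
then so does the original colouring. With `f = Y^δ ∏_{b ∈ B} (Y - x_b²)`, Laplace expansion of
`Δ_A` in the columns `Y^l` and `f Y^l` writes it as a combination of terms
`Δ_{A \ D} · Δ_D · ∏_{s ∈ D} f(x_s²)`; multiplied by `Δ_B`, each is a multiple of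
`Δ_{A \ D} · Δ_{D ∪ B}`. The condition on `ε ≥ 0` says that the power `x_s^(2δ)` makes up for the
change of the linear factors of the `x_s` with `s ∈ D`. -/
theorem exchange {n : ℕ} {K : Type*} [Field K] [CharZero K] {L : Type*} [DecidableEq L]
    (side : L → ℕ) (col : Fin n → L) {α β : L} (hαβ : α ≠ β)
    (J : Ideal (MvPolynomial (Fin n) K)) {j δ ε : ℕ}
    (hcard : (Finset.univ.filter (col · = α)).card
      = ((Finset.univ.filter (col · = β)).card + δ) + j)
    (hε : ε + side β = 2 * δ + side α)
    (hJ : ∀ D ⊆ Finset.univ.filter (col · = α), D.card = j →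
      colPoly K side (fun s => if s ∈ D then β else col s) ∈ J) :
    colPoly K side col ∈ J := by
  classical
  set A := Finset.univ.filter (col · = α) with hA
  set B := Finset.univ.filter (col · = β) with hB
  set y : Fin n → MvPolynomial (Fin n) K := fun s => X s ^ 2 with hy
  set p := B.card + δ with hp
  have hAB : Disjoint A B := by
    rw [Finset.disjoint_left]
    simp only [hA, hB, Finset.mem_filter, Finset.mem_univ, true_and]
    rintro s rfl h
    exact hαβ h
  obtain ⟨e₀⟩ : Nonempty (Fin (p + j) ≃ A) := ⟨(A.equivFinOfCardEq hcard).symm⟩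
  let e : Fin p ⊕ Fin j → Fin n := fun k => (e₀ (finSumFinEquiv k) : Fin n)
  have he : Function.Injective e :=
    Subtype.val_injective.comp (e₀.injective.comp finSumFinEquiv.injective)
  have heA : ∀ k, e k ∈ A := fun k => (e₀ _).2
  have heS : ∀ s ∈ A, ∃ k, e k = s := fun s hs =>
    ⟨finSumFinEquiv.symm (e₀.symm ⟨s, hs⟩), by simp [e]⟩
  let f : Polynomial (MvPolynomial (Fin n) K) :=
    Polynomial.X ^ δ * ∏ b ∈ B, (Polynomial.X - Polynomial.C (y b))
  have hfm : f.Monic := (Polynomial.monic_X_pow _).mul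
    (Polynomial.monic_prod_of_monic _ _ fun b _ => Polynomial.monic_X_sub_C _)
  have hfd : f.natDegree = p := by
    rw [(Polynomial.monic_X_pow _).natDegree_mul
      (Polynomial.monic_prod_of_monic _ _ fun b _ => Polynomial.monic_X_sub_C _),
      Polynomial.natDegree_X_pow, Polynomial.natDegree_prod_of_monic _ _
        (fun b _ => Polynomial.monic_X_sub_C _)]
    simp [hp, add_comm]
  have hdet := det_vandermonde_split (fun k => y (e k)) f hfm hfd
  have hvA : Associated (Matrix.vandermonde (fun i => y (e (finSumFinEquiv.symm i)))).det
      (vand y A) := by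
    have := vand_enum y (fun i => e (finSumFinEquiv.symm i))
      (he.comp finSumFinEquiv.symm.injective)
    convert this using 2
    ext s
    simp only [Finset.mem_image, Finset.mem_univ, true_and]
    constructor
    · intro hs
      obtain ⟨k, hk⟩ := heS s hs
      exact ⟨finSumFinEquiv k, by simpa using hk⟩
    · rintro ⟨k, rfl⟩
      exact heA _
  rw [hdet] at hvA
  set M : Matrix (Fin p ⊕ Fin j) (Fin p ⊕ Fin j) (MvPolynomial (Fin n) K) :=
    (Matrix.of fun (r k : Fin p ⊕ Fin j) =>
          Sum.elim (fun k : Fin p => y (e r) ^ (k : ℕ))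
            (fun k : Fin j => f.eval (y (e r)) * y (e r) ^ (k : ℕ)) k) with hM
  set W : MvPolynomial (Fin n) K := vand y B *
    (∏ p ∈ (Finset.univ : Finset (Fin n × Fin n)).filter
      (fun p => p.1 < p.2 ∧ col p.1 = col p.2 ∧ col p.1 ≠ α ∧ col p.1 ≠ β),
        (X p.1 ^ 2 - X p.2 ^ 2)) * ∏ s, X s ^ side (col s) with hW
  have hsplit : colPoly K side col = vand y A * W := by
    rw [colPoly_split K side col hαβ, hW]; ring
  rw [hsplit]
  suffices hterm : ∀ σ : Equiv.Perm (Fin p ⊕ Fin j),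
      ((Matrix.of fun i k => M (σ (Sum.inl i)) (Sum.inl k)).det *
        (Matrix.of fun i k => M (σ (Sum.inr i)) (Sum.inr k)).det) * W ∈ J by
    have h1 : M.det * W ∈ J := by
      have h2 : (((Fintype.card (Fin p)).factorial * (Fintype.card (Fin j)).factorial : ℕ) :
          MvPolynomial (Fin n) K) * M.det * W ∈ J := by
        rw [← sum_sign_det_mul_det, Finset.sum_mul]
        refine Ideal.sum_mem _ fun σ _ => ?_
        rw [mul_assoc]
        exact Ideal.mul_mem_left _ _ (hterm σ)
      -- characteristic zero: the multiplicity `p! j!` is invertible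
      set N := (Fintype.card (Fin p)).factorial * (Fintype.card (Fin j)).factorial with hN
      have hN0 : (N : K) ≠ 0 := by
        rw [hN]; exact_mod_cast mul_ne_zero (Nat.factorial_ne_zero _) (Nat.factorial_ne_zero _)
      have h3 := Ideal.mul_mem_left J (C (N : K)⁻¹) h2
      rw [mul_assoc, ← mul_assoc, ← map_natCast (C : K →+* MvPolynomial (Fin n) K), ← C_mul,
        inv_mul_cancel₀ hN0, C_1, one_mul] at h3
      exact h3
    exact (Ideal.mem_iff_of_associated (hvA.mul_right W)).1 h1
  intro σ
  let D : Finset (Fin n) := Finset.univ.image (fun k : Fin j => e (σ (Sum.inr k)))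
  let A' : Finset (Fin n) := Finset.univ.image (fun k : Fin p => e (σ (Sum.inl k)))
  have hinr : Function.Injective (fun k : Fin j => e (σ (Sum.inr k))) :=
    he.comp (σ.injective.comp Sum.inr_injective)
  have hinl : Function.Injective (fun k : Fin p => e (σ (Sum.inl k))) :=
    he.comp (σ.injective.comp Sum.inl_injective)
  have hDA : D ⊆ A := by
    intro s hs
    obtain ⟨k, _, rfl⟩ := Finset.mem_image.1 hs
    exact heA _
  have hDc : D.card = j := by
    rw [Finset.card_image_of_injective _ hinr]; simp
  have hA' : A' = A \ D := by
    ext s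
    simp only [A', D, Finset.mem_image, Finset.mem_univ, true_and, Finset.mem_sdiff]
    constructor
    · rintro ⟨k, rfl⟩
      refine ⟨heA _, ?_⟩
      rintro ⟨k', hk'⟩
      simpa using σ.injective (he hk')
    · rintro ⟨hs, hs'⟩
      obtain ⟨k, rfl⟩ := heS s hs
      obtain ⟨k, rfl⟩ := σ.surjective k
      rcases k with k | k
      · exact ⟨k, rfl⟩
      · exact absurd ⟨k, rfl⟩ hs'
  have hmem := hJ D hDA hDc
  set col' : Fin n → L := fun s => if s ∈ D then β else col s with hcol'
  have hcolD : ∀ s ∈ D, col s = α := fun s hs => by simpa [hA] using hDA hs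
  have hfα : Finset.univ.filter (col' · = α) = A' := by
    rw [hA']
    ext s
    simp only [hcol', hA, Finset.mem_filter, Finset.mem_univ, true_and, Finset.mem_sdiff]
    split_ifs with h <;> simp [h, hαβ.symm]
  have hfβ : Finset.univ.filter (col' · = β) = D ∪ B := by
    ext s
    simp only [hcol', hB, Finset.mem_filter, Finset.mem_univ, true_and, Finset.mem_union]
    split_ifs with h <;> simp [h]
  have hrest : (Finset.univ : Finset (Fin n × Fin n)).filter
      (fun p => p.1 < p.2 ∧ col' p.1 = col' p.2 ∧ col' p.1 ≠ α ∧ col' p.1 ≠ β)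
      = (Finset.univ : Finset (Fin n × Fin n)).filter
      (fun p => p.1 < p.2 ∧ col p.1 = col p.2 ∧ col p.1 ≠ α ∧ col p.1 ≠ β) := by
    ext q
    simp only [hcol', Finset.mem_filter, Finset.mem_univ, true_and]
    by_cases h1 : q.1 ∈ D <;> by_cases h2 : q.2 ∈ D
    · simp [h1, h2, hcolD]
    · simp [h1, h2, hcolD]
    · simp only [h1, h2, if_true, if_false, hcolD _ h2]
      tauto
    · simp [h1, h2]
  rw [colPoly_split K side col' hαβ, hfα, hfβ, hrest] at hmem
  have hx : (∏ s, (X s : MvPolynomial (Fin n) K) ^ side (col' s)) * ∏ s ∈ D, X s ^ ε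
      = (∏ s, X s ^ side (col s)) * ∏ s ∈ D, y s ^ δ := by
    have hext : ∀ g : Fin n → MvPolynomial (Fin n) K,
        ∏ s ∈ D, g s = ∏ s, if s ∈ D then g s else 1 := fun g => by
      rw [Finset.prod_ite_mem, Finset.univ_inter]
    rw [hext, hext, ← Finset.prod_mul_distrib, ← Finset.prod_mul_distrib]
    refine Finset.prod_congr rfl fun s _ => ?_
    by_cases hs : s ∈ D
    · simp only [hcol', hs, if_true, hcolD s hs, hy]
      rw [← pow_add, ← pow_mul, ← pow_add]
      congr 1; omega
    · simp [hcol', hs]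
  have h11 : Associated (Matrix.of fun i k => M (σ (Sum.inl i)) (Sum.inl k)).det
      (vand y A') := by
    have h := vand_enum y (fun k : Fin p => e (σ (Sum.inl k))) hinl
    convert h using 2
    ext1 i k
    simp [hM, Matrix.vandermonde_apply]
  have h22 : (Matrix.of fun i k => M (σ (Sum.inr i)) (Sum.inr k)).det
      = (∏ s ∈ D, y s ^ δ * ∏ b ∈ B, (y s - y b)) *
        (Matrix.vandermonde (fun k : Fin j => y (e (σ (Sum.inr k))))).det := by
    have h : (Matrix.of fun i k => M (σ (Sum.inr i)) (Sum.inr k))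
        = Matrix.of fun i k => f.eval (y (e (σ (Sum.inr i)))) *
          (Matrix.vandermonde (fun k : Fin j => y (e (σ (Sum.inr k))))) i k := by
      ext1 i k; simp [hM, Matrix.vandermonde_apply]
    rw [h, Matrix.det_mul_column, Finset.prod_image (fun a _ b _ hab => hinr hab)]
    congr 1
    refine Finset.prod_congr rfl fun k _ => ?_
    simp [f, Polynomial.eval_prod]
  have hD := vand_enum y (fun k : Fin j => e (σ (Sum.inr k))) hinr
  have hU := vand_union y D B (hAB.mono_left hDA)
  have hassoc : Associated
      ((vand y A' * vand y (D ∪ B) * (∏ p ∈ (Finset.univ : Finset (Fin n × Fin n)).filter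
      (fun p => p.1 < p.2 ∧ col p.1 = col p.2 ∧ col p.1 ≠ α ∧ col p.1 ≠ β),
        (X p.1 ^ 2 - X p.2 ^ 2)) * ∏ s, X s ^ side (col' s)) * ∏ s ∈ D, X s ^ ε)
      (((Matrix.of fun i k => M (σ (Sum.inl i)) (Sum.inl k)).det *
        (Matrix.of fun i k => M (σ (Sum.inr i)) (Sum.inr k)).det) * W) := by
    rw [mul_assoc, hx, h22, hW, Finset.prod_mul_distrib]
    refine (((h11.symm.mul_mul (hU.symm.trans
      ((hD.symm.mul_right _).mul_right _))).mul_right _).mul_right _).trans ?_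
    refine Associated.of_eq ?_
    ring
  exact (Ideal.mem_iff_of_associated hassoc).1 (Ideal.mul_mem_right _ _ hmem)

end

/-! ### The interlaced dominance order -/

/-- Let `c' ≠ c` have the same total, with `c'` dominated by `c`, both weakly decreasing along
even and along odd indices. Then there are `i < k` such that `c'` remains of this kind after a
move raising it at `i` and lowering it at `k`, and such that the partial sums of `c'` are strictly
below those of `c` wherever the move increases them. If `k - i` is even the move adds `1` at `i`
and subtracts `1` at `k`, so all partial sums of length in `(i, k]` increase; if `k - i` is odd it
adds `1` at `i, i + 2, …` and subtracts `1` at `i + 1, i + 3, …, k`, so only those with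
`r - i` odd increase. -/
theorem exists_move (c c' : ℕ → ℕ) (hc : ∀ k, c (k + 2) ≤ c k) (hc' : ∀ k, c' (k + 2) ≤ c' k)
    (hfin : ∃ N, ∀ k, N ≤ k → c' k = 0)
    (hdom : ∀ k, ∑ r ∈ Finset.range k, c' r ≤ ∑ r ∈ Finset.range k, c r)
    (htot : ∃ N, ∀ k, N ≤ k → ∑ r ∈ Finset.range k, c' r = ∑ r ∈ Finset.range k, c r)
    (hne : c' ≠ c) :
    ∃ i k, i < k ∧ c' (k + 2) < c' k ∧ (2 ≤ i → c' i < c' (i - 2)) ∧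
      ∀ r, i < r → r ≤ k → ((k - i) % 2 = 0 ∨ (r - i) % 2 = 1) →
        ∑ s ∈ Finset.range r, c' s < ∑ s ∈ Finset.range r, c s := by
  classical
  set S : ℕ → ℕ := fun k => ∑ r ∈ Finset.range k, c r with hS
  set S' : ℕ → ℕ := fun k => ∑ r ∈ Finset.range k, c' r with hS'
  have hs : ∀ k, S (k + 1) = S k + c k := fun k => Finset.sum_range_succ _ _
  have hs' : ∀ k, S' (k + 1) = S' k + c' k := fun k => Finset.sum_range_succ _ _
  change ∀ k, S' k ≤ S k at hdom
  change ∃ N, ∀ k, N ≤ k → S' k = S k at htot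
  change ∃ i k, i < k ∧ c' (k + 2) < c' k ∧ (2 ≤ i → c' i < c' (i - 2)) ∧
      ∀ r, i < r → r ≤ k → ((k - i) % 2 = 0 ∨ (r - i) % 2 = 1) → S' r < S r
  -- the first index at which the sequences differ
  have hex : ∃ i, c' i ≠ c i := by
    by_contra! h
    exact hne (funext h)
  obtain ⟨i₀, hi₀, hmin⟩ : ∃ i, c' i ≠ c i ∧ ∀ r < i, c' r = c r :=
    ⟨Nat.find hex, Nat.find_spec hex, fun r hr => not_not.1 (Nat.find_min hex hr)⟩
  have heq : S' i₀ = S i₀ :=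
    Finset.sum_congr rfl fun r hr => hmin r (Finset.mem_range.1 hr)
  have hgt : c' i₀ < c i₀ := by
    have := hdom (i₀ + 1)
    rw [hs, hs'] at this
    omega
  have hadd : 2 ≤ i₀ → c' i₀ < c' (i₀ - 2) := by
    intro h2
    have h3 := hc (i₀ - 2)
    rw [show i₀ - 2 + 2 = i₀ by omega] at h3
    have := hmin (i₀ - 2) (by omega)
    omega
  -- the first index `m` with `c m < c' m`
  have hex2 : ∃ m, c m < c' m := by
    by_contra! h
    obtain ⟨N, hN⟩ := htot
    have : ∀ d, S' (i₀ + 1 + d) < S (i₀ + 1 + d) := by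
      intro d
      induction d with
      | zero => rw [add_zero, hs, hs']; omega
      | succ d ih =>
        have := h (i₀ + 1 + d)
        rw [← add_assoc, hs, hs']; omega
    have h1 := this N
    have h2 := hN (i₀ + 1 + N) (by omega)
    omega
  obtain ⟨m, hm, hmmin⟩ : ∃ m, c m < c' m ∧ ∀ r < m, c' r ≤ c r :=
    ⟨Nat.find hex2, Nat.find_spec hex2, fun r hr => not_lt.1 (Nat.find_min hex2 hr)⟩
  have him : i₀ < m := by
    by_contra! h
    rcases h.lt_or_eq with h | h
    · have := hmin m h; omega
    · subst h; omega
  have hlow : ∀ r, i₀ < r → r ≤ m → S' r < S r := by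
    intro r h1 h2
    induction r with
    | zero => omega
    | succ r ih =>
      rw [hs, hs']
      have h3 := hmmin r (by omega)
      rcases (Nat.lt_succ_iff.1 h1).lt_or_eq with h | h
      · have := ih h (by omega); omega
      · subst h; omega
  have hex3 : ∃ r, c' (m + 2 * r) < c' m := by
    obtain ⟨N, hN⟩ := hfin
    exact ⟨N, by rw [hN _ (by omega)]; omega⟩
  obtain ⟨r₀, hr₀, hrmin⟩ : ∃ r, c' (m + 2 * r) < c' m ∧ ∀ s < r, c' m ≤ c' (m + 2 * s) :=
    ⟨Nat.find hex3, Nat.find_spec hex3, fun r hr => not_lt.1 (Nat.find_min hex3 hr)⟩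
  have hcm : ∀ s, c (m + 2 * s) ≤ c m := by
    intro s
    induction s with
    | zero => simp
    | succ s ih => exact (hc _).trans ih
  have hc'm : ∀ s, c' (m + 2 * s) ≤ c' m := by
    intro s
    induction s with
    | zero => simp
    | succ s ih => exact (hc' _).trans ih
  obtain ⟨d, rfl⟩ : ∃ d, r₀ = d + 1 := by
    cases r₀ with
    | zero => simp at hr₀
    | succ d => exact ⟨d, rfl⟩
  set k := m + 2 * d with hk
  have hrem : c' (k + 2) < c' k := by
    have h1 := hrmin d (by omega)
    have h2 : k + 2 = m + 2 * (d + 1) := by omega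
    rw [h2]; exact hr₀.trans_le h1
  have hrun : ∀ r, m ≤ r → r ≤ k → (r - m) % 2 = 0 → S' r < S r := by
    intro r h1 h2 h3
    obtain ⟨s, rfl⟩ : ∃ s, r = m + 2 * s := ⟨(r - m) / 2, by omega⟩
    have h4 := hdom (m + 2 * s + 1)
    rw [hs, hs'] at h4
    have := hcm s
    have := hrmin s (by omega)
    omega
  -- `k` ends the run of constant values of the second sequence starting at `m`
  by_cases hpar : (k - i₀) % 2 = 1
  · refine ⟨i₀, k, by omega, hrem, hadd, fun r h1 h2 h3 => ?_⟩
    by_cases h : r ≤ m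
    · exact hlow r h1 h
    · exact hrun r (by omega) h2 (by omega)
  by_cases hall : ∀ r, i₀ < r → r ≤ k → S' r < S r
  · exact ⟨i₀, k, by omega, hrem, hadd, fun r h1 h2 _ => hall r h1 h2⟩
  push Not at hall
  obtain ⟨z, hz1, hz2, hz3⟩ := hall
  have hzm : m < z := by
    by_contra! h
    have := hlow z hz1 h; omega
  have hzp : (z - m) % 2 = 1 := by
    by_contra h
    have := hrun z hzm.le hz2 (by omega); omega
  -- the partial sums agree at `z` but not at `z + 1`; following `c` back gives a new start `i`
  -- of the same parity as `z`, that is, of the parity opposite to `k`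
  have hcz : c' z < c z := by
    have h1 := hrun (z + 1) (by omega) (by omega) (by omega)
    rw [hs, hs'] at h1
    omega
  have hback : ∀ r, c' r < c r → ∃ i ≤ r, (r - i) % 2 = 0 ∧ (2 ≤ i → c' i < c' (i - 2)) ∧
      ∀ q, i ≤ q → q ≤ r → (r - q) % 2 = 0 → c' q < c q := by
    intro r
    induction r using Nat.strong_induction_on with
    | _ r ih =>
      intro hr
      by_cases h : 2 ≤ r → c' r < c' (r - 2)
      · exact ⟨r, le_rfl, by simp, h, fun q h1 h2 _ => by rwa [le_antisymm h2 h1]⟩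
      · push Not at h
        obtain ⟨h2, h3⟩ := h
        have h4 := hc (r - 2)
        rw [show r - 2 + 2 = r by omega] at h4
        obtain ⟨i, hi1, hi2, hi3, hi4⟩ := ih (r - 2) (by omega) (by omega)
        refine ⟨i, by omega, by omega, hi3, fun q h5 h6 h7 => ?_⟩
        by_cases hq : q = r
        · rwa [hq]
        · exact hi4 q h5 (by omega) (by omega)
  obtain ⟨i, hi1, hi2, hi3, hi4⟩ := hback z hcz
  refine ⟨i, k, by omega, hrem, hi3, fun r h1 h2 h3 => ?_⟩
  by_cases h : r ≤ z + 1
  · have h5 := hi4 (r - 1) (by omega) (by omega) (by omega)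
    have h6 := hdom (r - 1)
    obtain ⟨r, rfl⟩ : ∃ q, r = q + 1 := ⟨r - 1, by omega⟩
    rw [hs, hs']
    simp only [Nat.add_sub_cancel] at h5 h6
    omega
  · exact hrun r (by omega) h2 (by omega)

/-- Labels of the columns of a pair of Young diagrams: the side (`0` left, `1` right) and the
column index. There are `n + 1` labels on each side, so that an unused one is always
available. -/
abbrev Lab (n : ℕ) := Fin 2 × Fin (n + 1)

/-- The height of the column `l` of a colouring: the size of its colour class. -/
def hgt {n : ℕ} (col : Fin n → Lab n) (l : Lab n) : ℕ :=
  (Finset.univ.filter (col · = l)).card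

/-- Interlacing the rows as left row `0`, right row `0`, left row `1`, right row `1`, …, the cells
of a column of height `h` on side `s` sit at the positions `s, s + 2, …` strictly below
`2 * h + s`. -/
def topOf {n : ℕ} (h : Lab n → ℕ) (l : Lab n) : ℕ := 2 * h l + l.1

/-- The number of columns with tops `t` that have a cell in the interlaced row `k`; for the
columns of a pair of diagrams `(f, g)` this is the sequence `f 0, g 0, f 1, g 1, …`. -/
def shp {n : ℕ} (t : Lab n → ℕ) (k : ℕ) : ℕ :=
  (Finset.univ.filter (fun l => t l % 2 = k % 2 ∧ k < t l)).card

theorem shp_antitone {n : ℕ} (t : Lab n → ℕ) (k : ℕ) : shp t (k + 2) ≤ shp t k := by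
  refine Finset.card_le_card fun l => ?_
  simp only [Finset.mem_filter, Finset.mem_univ, true_and]
  omega

theorem shp_eventually {n : ℕ} (t : Lab n → ℕ) : ∃ N, ∀ k, N ≤ k → shp t k = 0 := by
  refine ⟨∑ l, t l, fun k hk => ?_⟩
  rw [shp, Finset.card_eq_zero, Finset.filter_eq_empty_iff]
  intro l _ h
  have := Finset.single_le_sum (f := t) (fun _ _ => Nat.zero_le _) (Finset.mem_univ l)
  omega

theorem exists_top_eq {n : ℕ} (t : Lab n → ℕ) (k : ℕ) (h : shp t (k + 2) < shp t k) :
    ∃ l, t l = k + 2 := by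
  by_contra! hne
  refine absurd h (not_lt.2 (Finset.card_le_card fun l => ?_))
  simp only [Finset.mem_filter, Finset.mem_univ, true_and]
  have := hne l
  omega

/-- There is an empty column on each side, since only `n` of the labels can be used. -/
theorem exists_top_eq_small {n : ℕ} (col : Fin n → Lab n) (i : ℕ) (hi : i < 2) :
    ∃ l, topOf (hgt col) l = i := by
  have hcard : (Finset.univ.image col).card
      < (Finset.univ.image (fun j : Fin (n + 1) => ((⟨i, hi⟩ : Fin 2), j))).card := by
    rw [Finset.card_image_of_injective _ (Prod.mk_right_injective _)]
    have := Finset.card_image_le (s := Finset.univ) (f := col)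
    simp only [Finset.card_univ, Fintype.card_fin] at this ⊢
    omega
  obtain ⟨l, hl, hl'⟩ := Finset.exists_mem_notMem_of_card_lt_card hcard
  obtain ⟨j, _, rfl⟩ := Finset.mem_image.1 hl
  refine ⟨(⟨i, hi⟩, j), ?_⟩
  have : hgt col (⟨i, hi⟩, j) = 0 := by
    rw [hgt, Finset.card_eq_zero, Finset.filter_eq_empty_iff]
    exact fun s _ hs => hl' (Finset.mem_image.2 ⟨s, Finset.mem_univ _, hs⟩)
  simp [topOf, this]

theorem hgt_recolor {n : ℕ} (col : Fin n → Lab n) {α β : Lab n} (hαβ : α ≠ β)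
    (D : Finset (Fin n)) (hcolD : ∀ s ∈ D, col s = α) :
    (∀ l, l ≠ α → l ≠ β → hgt (fun s => if s ∈ D then β else col s) l = hgt col l) ∧
      hgt col α = hgt (fun s => if s ∈ D then β else col s) α + D.card ∧
      hgt (fun s => if s ∈ D then β else col s) β = hgt col β + D.card := by
  refine ⟨fun l h1 h2 => ?_, ?_, ?_⟩
  · simp only [hgt]
    congr 1
    ext s
    simp only [Finset.mem_filter, Finset.mem_univ, true_and]
    split_ifs with h
    · simp [hcolD s h, h1.symm, h2.symm]
    · rfl
  · rw [hgt, hgt, ← Finset.card_union_of_disjoint]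
    · congr 1
      ext s
      simp only [Finset.mem_filter, Finset.mem_univ, true_and, Finset.mem_union]
      split_ifs with h <;> simp [h, hcolD]
    · rw [Finset.disjoint_left]
      intro s hs hs'
      simp [hs', hαβ.symm] at hs
  · rw [hgt, hgt, ← Finset.card_union_of_disjoint]
    · congr 1
      ext s
      simp only [Finset.mem_filter, Finset.mem_univ, true_and, Finset.mem_union]
      split_ifs with h <;> simp [h]
    · rw [Finset.disjoint_left]
      intro s hs hs'
      simp [hcolD s hs', hαβ] at hs

/-- The effect on `shp` at row `r` of lowering a top from `k + 2` to `k + 2 - 2j` and raising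
another from `i` to `i + 2j`, as the difference of consecutive values of the indicator function of
the partial sums that increase. Here `j = 1` if `i ≡ k` mod 2, and otherwise `2j = k + 1 - i`, in
which case the tops become `i + 1` and `k + 1`. -/
theorem move_increment (i k j r : ℕ) (hik : i < k)
    (hj : ((k - i) % 2 = 0 ∧ j = 1) ∨ ((k - i) % 2 = 1 ∧ 2 * j = k + 1 - i)) :
    (((if (k + 2 - 2 * j) % 2 = r % 2 ∧ r < k + 2 - 2 * j then 1 else 0)
        - (if (k + 2) % 2 = r % 2 ∧ r < k + 2 then 1 else 0)) +
      ((if (i + 2 * j) % 2 = r % 2 ∧ r < i + 2 * j then 1 else 0)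
        - (if i % 2 = r % 2 ∧ r < i then 1 else 0)) : ℤ) =
    (if i < r + 1 ∧ r + 1 ≤ k ∧ ((k - i) % 2 = 0 ∨ (r + 1 - i) % 2 = 1) then 1 else 0)
        - (if i < r ∧ r ≤ k ∧ ((k - i) % 2 = 0 ∨ (r - i) % 2 = 1) then 1 else 0) := by
  rcases hj with ⟨hj, rfl⟩ | ⟨hj, hj2⟩
  · simp only [hj, true_or, and_true]
    split_ifs <;> omega
  · rw [show k + 2 - 2 * j = i + 1 by omega, show i + 2 * j = k + 1 by omega]
    have h0 : ¬ (k - i) % 2 = 0 := by omega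
    simp only [h0, false_or]
    clear h0 hj2
    obtain ⟨d, rfl⟩ : ∃ d, k = i + 2 * d + 1 := ⟨(k - i) / 2, by omega⟩
    clear hj
    split_ifs <;> omega

/-- If `J` contains all colouring polynomials of interlaced shape `c`, it contains those of every
shape dominated by `c`. Induction on the sum of the squares of the tops, which strictly decreases
under the moves of `exists_move`; the exchange lemma passes from the moved colourings back to the
original one. -/
theorem mem_of_dominated {n : ℕ} {K : Type*} [Field K] [CharZero K]
    (J : Ideal (MvPolynomial (Fin n) K)) (c : ℕ → ℕ) (hc : ∀ k, c (k + 2) ≤ c k)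
    (hJ : ∀ col : Fin n → Lab n, shp (topOf (hgt col)) = c →
      colPoly K (fun l : Lab n => (l.1 : ℕ)) col ∈ J) (w : ℕ) :
    ∀ col : Fin n → Lab n, ∑ l, topOf (hgt col) l ^ 2 = w →
    (∀ k, ∑ r ∈ Finset.range k, shp (topOf (hgt col)) r ≤ ∑ r ∈ Finset.range k, c r) →
    (∃ N, ∀ k, N ≤ k → ∑ r ∈ Finset.range k, shp (topOf (hgt col)) r
      = ∑ r ∈ Finset.range k, c r) →
    colPoly K (fun l : Lab n => (l.1 : ℕ)) col ∈ J := by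
  induction w using Nat.strong_induction_on with
  | _ w ih =>
  intro col hw hdom htot
  by_cases hne : shp (topOf (hgt col)) = c
  · exact hJ col hne
  obtain ⟨i, k, hik, hrem, hadd, hstrict⟩ :=
    exists_move c _ hc (shp_antitone _) (shp_eventually _) hdom htot hne
  obtain ⟨α, hα⟩ := exists_top_eq _ _ hrem
  obtain ⟨β, hβ⟩ : ∃ β, topOf (hgt col) β = i := by
    by_cases h2 : 2 ≤ i
    · obtain ⟨i, rfl⟩ : ∃ q, i = q + 2 := ⟨i - 2, by omega⟩
      exact exists_top_eq _ _ (hadd h2)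
    · exact exists_top_eq_small col i (by omega)
  have hαβ : α ≠ β := by rintro rfl; omega
  obtain ⟨j, hj⟩ : ∃ j, ((k - i) % 2 = 0 ∧ j = 1) ∨ ((k - i) % 2 = 1 ∧ 2 * j = k + 1 - i) := by
    by_cases h : (k - i) % 2 = 0
    · exact ⟨1, Or.inl ⟨h, rfl⟩⟩
    · exact ⟨(k + 1 - i) / 2, Or.inr ⟨by omega, by omega⟩⟩
  have hα' : 2 * hgt col α + (α.1 : ℕ) = k + 2 := hα
  have hβ' : 2 * hgt col β + (β.1 : ℕ) = i := hβ
  have hα1 := α.1.2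
  have hβ1 := β.1.2
  refine exchange (fun l : Lab n => (l.1 : ℕ)) col hαβ J (j := j)
    (δ := hgt col α - hgt col β - j) (ε := k + 2 - i - 2 * j) ?_ ?_ ?_
  · change hgt col α = hgt col β + _ + j
    omega
  · omega
  intro D hD hDc
  set col' : Fin n → Lab n := fun s => if s ∈ D then β else col s with hcol'
  set t := topOf (hgt col) with ht
  set t' := topOf (hgt col') with ht'
  have hcolD : ∀ s ∈ D, col s = α := fun s hs => by simpa using hD hs
  obtain ⟨hr1, hr2, hr3⟩ := hgt_recolor col hαβ D hcolD
  rw [hDc] at hr2 hr3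
  have hother : ∀ l, l ≠ α → l ≠ β → t' l = t l := by
    intro l h1 h2
    simp only [ht, ht', topOf, hr1 l h1 h2, hcol']
  have hα2 : t' α + 2 * j = t α := by
    simp only [ht, ht', topOf, hcol']; omega
  have hβ2 : t' β = t β + 2 * j := by
    simp only [ht, ht', topOf, hcol']; omega
  have hdiff : ∀ F : ℕ → ℤ, ∑ l, F (t' l) - ∑ l, F (t l)
      = (F (t' α) - F (t α)) + (F (t' β) - F (t β)) := by
    intro F
    rw [← Finset.sum_sub_distrib]
    refine Finset.sum_eq_add α β hαβ ?_ (by simp) (by simp)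
    intro l _ h
    rw [hother l h.1 h.2, sub_self]
  have hshp : ∀ r, (shp t' r : ℤ) = shp t r +
      ((if i < r + 1 ∧ r + 1 ≤ k ∧ ((k - i) % 2 = 0 ∨ (r + 1 - i) % 2 = 1) then 1 else 0)
        - (if i < r ∧ r ≤ k ∧ ((k - i) % 2 = 0 ∨ (r - i) % 2 = 1) then 1 else 0)) := by
    intro r
    have h := hdiff (fun x => if x % 2 = r % 2 ∧ r < x then 1 else 0)
    have hs : ∀ u : Lab n → ℕ, (shp u r : ℤ)
        = ∑ l, (if u l % 2 = r % 2 ∧ r < u l then 1 else 0) := by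
      intro u; rw [shp]; push_cast [Finset.card_filter]; rfl
    rw [hs t, hs t']
    rw [sub_eq_iff_eq_add'] at h
    rw [h]
    congr 1
    have e1 : t' α = k + 2 - 2 * j := by omega
    have e2 : t' β = i + 2 * j := by omega
    rw [e1, e2, hα, hβ]
    exact move_increment i k j r hik hj
  have hsum : ∀ r, ((∑ s ∈ Finset.range r, shp t' s : ℕ) : ℤ)
      = (∑ s ∈ Finset.range r, shp t s : ℕ) +
        (if i < r ∧ r ≤ k ∧ ((k - i) % 2 = 0 ∨ (r - i) % 2 = 1) then 1 else 0) := by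
    intro r
    induction r with
    | zero => simp
    | succ r ihr =>
      rw [Finset.sum_range_succ, Finset.sum_range_succ]
      push_cast at ihr ⊢
      rw [ihr, hshp r]; ring
  have hweight : ∑ l, t' l ^ 2 < w := by
    have h := hdiff (fun x => (x : ℤ) ^ 2)
    have h1 : (t' α : ℤ) = t α - 2 * j := by omega
    have h2 : (t' β : ℤ) = t β + 2 * j := by omega
    rw [h1, h2, hα, hβ] at h
    have h3 : ((k : ℤ) + 2 - 2 * j) - i ≥ 1 := by omega
    have h4 : (j : ℤ) ≥ 1 := by omega
    have h5 : (∑ l, (t' l : ℤ) ^ 2) < ∑ l, (t l : ℤ) ^ 2 := by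
      push_cast at h
      nlinarith
    rw [← hw]
    exact_mod_cast h5
  refine ih _ hweight col' rfl ?_ ?_
  · intro r
    change ∑ s ∈ Finset.range r, shp t' s ≤ _
    have h1 := hsum r
    have h2 := hdom r
    split_ifs at h1 with h
    · have := hstrict r h.1 h.2.1 h.2.2
      omega
    · omega
  · obtain ⟨N, hN⟩ := htot
    refine ⟨max N (k + 1), fun r hr => ?_⟩
    change ∑ s ∈ Finset.range r, shp t' s = _
    have h1 := hsum r
    have h2 := hN r (by omega)
    rw [if_neg (by omega)] at h1
    omega

/-! ### Bitableaux as colourings -/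

/-- The component of the pair `(f, g)` on side `s`. -/
def sel (f g : ℕ → ℕ) (s : Fin 2) : ℕ → ℕ := if s = 0 then f else g

/-- The interlaced sequence `f 0, g 0, f 1, g 1, …`. Bidominance is dominance of these
sequences. -/
def interl (f g : ℕ → ℕ) (k : ℕ) : ℕ := if k % 2 = 0 then f (k / 2) else g (k / 2)

theorem isPartitionFun_sel {n : ℕ} {f g : ℕ → ℕ} (h : IsBP n f g) (s : Fin 2) :
    IsPartitionFun n (sel f g s) := by
  unfold sel; split_ifs
  · exact h.1
  · exact h.2.1

theorem sel_le {n : ℕ} {f g : ℕ → ℕ} (h : IsBP n f g) (s : Fin 2) (i : ℕ) :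
    sel f g s i ≤ n := by
  by_cases hi : n ≤ i
  · rw [(isPartitionFun_sel h s).2 i hi]; exact Nat.zero_le _
  · have h1 := Finset.single_le_sum (f := fun i => f i + g i) (fun _ _ => Nat.zero_le _)
      (Finset.mem_range.2 (not_le.1 hi))
    simp only [h.2.2] at h1
    unfold sel; split_ifs <;> omega

theorem mem_cellsF_sel {n : ℕ} {f g : ℕ → ℕ} (h : IsBP n f g) (s : Fin 2) (c : ℕ × ℕ) :
    c ∈ cellsF n (sel f g s) ↔ c.2 < sel f g s c.1 := by
  simp only [cellsF, Finset.mem_filter, Finset.mem_product, Finset.mem_range, and_iff_right_iff_imp]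
  intro hc
  refine ⟨?_, hc.trans_le (sel_le h s _)⟩
  by_contra! hn
  rw [(isPartitionFun_sel h s).2 _ hn] at hc
  exact absurd hc (Nat.not_lt_zero _)

/-- The defining Galois property of the conjugate partition. -/
theorem lt_conjF {n : ℕ} {f : ℕ → ℕ} (h : IsPartitionFun n f) (i j : ℕ) :
    i < conjF n f j ↔ j < f i := by
  constructor
  · intro hi
    by_contra! hj
    have : (Finset.range n).filter (fun r => j < f r) ⊆ Finset.range i := by
      intro r hr
      rw [Finset.mem_filter] at hr
      rw [Finset.mem_range]
      by_contra! hir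
      have := h.1 hir
      omega
    have := Finset.card_le_card this
    rw [Finset.card_range] at this
    exact absurd hi (not_lt.2 this)
  · intro hj
    have : Finset.range (i + 1) ⊆ (Finset.range n).filter (fun r => j < f r) := by
      intro r hr
      rw [Finset.mem_range] at hr
      have h1 := h.1 (Nat.lt_succ_iff.1 hr)
      rw [Finset.mem_filter, Finset.mem_range]
      refine ⟨?_, by omega⟩
      by_contra! hn
      have := h.2 r hn
      omega
    have := Finset.card_le_card this
    rw [Finset.card_range] at this
    exact this

/-- The height of the column `l` of the pair of Young diagrams `(f, g)`. -/
def hgtF (n : ℕ) (f g : ℕ → ℕ) (l : Lab n) : ℕ := conjF n (sel f g l.1) l.2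

theorem shp_hgtF {n : ℕ} {f g : ℕ → ℕ} (h : IsBP n f g) :
    shp (topOf (hgtF n f g)) = interl f g := by
  funext k
  obtain ⟨s, hsv⟩ : ∃ s : Fin 2, (s : ℕ) = k % 2 := ⟨⟨k % 2, Nat.mod_lt _ (by norm_num)⟩, rfl⟩
  have h1 : interl f g k = sel f g s (k / 2) := by
    simp only [interl, sel, Fin.ext_iff, Fin.val_zero, hsv]
    split_ifs <;> rfl
  have h2 : (Finset.univ.filter fun l : Lab n =>
      topOf (hgtF n f g) l % 2 = k % 2 ∧ k < topOf (hgtF n f g) l)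
      = {s} ×ˢ (Finset.univ.filter fun j : Fin (n + 1) => (j : ℕ) < sel f g s (k / 2)) := by
    refine Finset.ext fun (l : Lab n) => ?_
    refine (Finset.mem_filter.trans (and_iff_right (Finset.mem_univ _))).trans ?_
    rw [Finset.mem_product, Finset.mem_singleton, Finset.mem_filter_univ]
    unfold topOf
    have ha := l.1.2
    have hs : l.1 = s ↔ (l.1 : ℕ) = k % 2 := by rw [Fin.ext_iff, hsv]
    by_cases has : l.1 = s
    · have hk := hs.1 has
      rw [← lt_conjF (isPartitionFun_sel h _)]
      simp only [hgtF, has, true_and]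
      omega
    · simp only [has, false_and, iff_false]
      rw [hs] at has
      omega
  rw [shp, h2, h1, Finset.card_product, Finset.card_singleton, one_mul,
    Fin.card_filter_val_lt]
  have := sel_le h s (k / 2)
  omega

/-- The interlaced shape determines the tops up to a permutation of the labels, because
`shp t (k - 2) - shp t k` counts the tops equal to `k`. -/
theorem exists_perm_of_shp_eq {n : ℕ} (t₁ t₂ : Lab n → ℕ) (h₁ : ∀ l, t₁ l % 2 = l.1)
    (h₂ : ∀ l, t₂ l % 2 = l.1) (h : shp t₁ = shp t₂) :
    ∃ π : Equiv.Perm (Lab n), ∀ l, t₂ (π l) = t₁ l := by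
  have hcount : ∀ t : Lab n → ℕ, (∀ l, t l % 2 = l.1) → ∀ k,
      (Finset.univ.filter (fun l => t l = k)).card + shp t k
        = if 2 ≤ k then shp t (k - 2)
          else (Finset.univ.filter (fun l : Lab n => (l.1 : ℕ) = k % 2)).card := by
    intro t ht k
    rw [shp, ← Finset.card_union_of_disjoint]
    · split_ifs with hk
      · rw [shp]
        congr 1
        ext l
        simp only [Finset.mem_union, Finset.mem_filter, Finset.mem_univ, true_and]
        omega
      · congr 1
        ext l
        have := ht l
        simp only [Finset.mem_union, Finset.mem_filter, Finset.mem_univ, true_and]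
        omega
    · rw [Finset.disjoint_left]
      simp only [Finset.mem_filter, Finset.mem_univ, true_and]
      intro l; omega
  have hfib : ∀ k, (Finset.univ.filter (fun l => t₁ l = k)).card
      = (Finset.univ.filter (fun l => t₂ l = k)).card := by
    intro k
    have a1 := hcount t₁ h₁ k
    have a2 := hcount t₂ h₂ k
    rw [h] at a1
    omega
  have e : ∀ k, Nonempty ({l // t₁ l = k} ≃ {l // t₂ l = k}) := by
    intro k
    refine ⟨Fintype.equivOfCardEq ?_⟩
    rw [Fintype.card_subtype, Fintype.card_subtype, hfib]
  exact ⟨Equiv.ofFiberEquiv fun k => (e k).some, fun l => Equiv.ofFiberEquiv_map _ l⟩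

/-- The filling of the diagram on side `s`. -/
def Bitableau.ent {n : ℕ} {f g : ℕ → ℕ} (bt : Bitableau n f g) (s : Fin 2) : ℕ × ℕ → Fin n :=
  if s = 0 then bt.left else bt.right

theorem Bitableau.exists_ent {n : ℕ} {f g : ℕ → ℕ} (bt : Bitableau n f g) (k : Fin n) :
    ∃ s, ∃ c ∈ cellsF n (sel f g s), bt.ent s c = k := by
  obtain ⟨c | c, ⟨hc, hc'⟩, -⟩ := bt.bij k
  · exact ⟨0, c, hc, hc'⟩
  · exact ⟨1, c, hc, hc'⟩

theorem Bitableau.ent_inj {n : ℕ} {f g : ℕ → ℕ} (bt : Bitableau n f g) {s s' : Fin 2}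
    {c c' : ℕ × ℕ} (hc : c ∈ cellsF n (sel f g s)) (hc' : c' ∈ cellsF n (sel f g s'))
    (h : bt.ent s c = bt.ent s' c') : s = s' ∧ c = c' := by
  have key := (bt.bij (bt.ent s c)).unique
    (y₁ := if s = 0 then Sum.inl c else Sum.inr c)
    (y₂ := if s' = 0 then Sum.inl c' else Sum.inr c')
  fin_cases s <;> fin_cases s'
  · simpa using key ⟨hc, rfl⟩ ⟨hc', h.symm⟩
  · simpa using key ⟨hc, rfl⟩ ⟨hc', h.symm⟩
  · simpa using key ⟨hc, rfl⟩ ⟨hc', h.symm⟩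
  · simpa using key ⟨hc, rfl⟩ ⟨hc', h.symm⟩

/-- The colouring gives each number the side and the column index of its cell in `bt`. -/
def Bitableau.Compatible {n : ℕ} {f g : ℕ → ℕ} (bt : Bitableau n f g)
    (col : Fin n → Lab n) : Prop :=
  ∀ s, ∀ c ∈ cellsF n (sel f g s), (col (bt.ent s c)).1 = s ∧ ((col (bt.ent s c)).2 : ℕ) = c.2

theorem Bitableau.exists_compatible {n : ℕ} {f g : ℕ → ℕ} (bt : Bitableau n f g) :
    ∃ col, bt.Compatible col := by
  choose s c hc hs using bt.exists_ent
  refine ⟨fun k => (s k, Fin.ofNat (n + 1) (c k).2), fun a d hd => ?_⟩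
  obtain ⟨h1, h2⟩ := bt.ent_inj (hc _) hd (hs (bt.ent a d))
  refine ⟨h1, ?_⟩
  simp only [h2, Fin.val_ofNat]
  refine Nat.mod_eq_of_lt ?_
  simp only [cellsF, Finset.mem_filter, Finset.mem_product, Finset.mem_range] at hd
  omega

theorem Bitableau.Compatible.hgt_eq {n : ℕ} {f g : ℕ → ℕ} (h : IsBP n f g)
    {bt : Bitableau n f g} {col : Fin n → Lab n} (hcol : bt.Compatible col) :
    hgt col = hgtF n f g := by
  funext l
  symm
  unfold hgtF conjF hgt
  have hmem : ∀ i, i ∈ (Finset.range n).filter (fun i => (l.2 : ℕ) < sel f g l.1 i) →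
      (i, (l.2 : ℕ)) ∈ cellsF n (sel f g l.1) := by
    intro i hi
    exact (mem_cellsF_sel h _ _).2 (Finset.mem_filter.1 hi).2
  refine Finset.card_bij (fun i _ => bt.ent l.1 (i, (l.2 : ℕ))) ?_ ?_ ?_
  · intro i hi
    obtain ⟨h1, h2⟩ := hcol _ _ (hmem i hi)
    exact Finset.mem_filter.2 ⟨Finset.mem_univ _, Prod.ext h1 (Fin.ext h2)⟩
  · intro i hi i' hi' hii
    exact congrArg Prod.fst (bt.ent_inj (hmem i hi) (hmem i' hi') hii).2
  · intro k hk
    obtain ⟨s, c, hc, rfl⟩ := bt.exists_ent k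
    obtain ⟨h1, h2⟩ := hcol _ _ hc
    have hl := (Finset.mem_filter.1 hk).2
    rw [hl] at h1 h2
    subst h1
    have hc2 := (mem_cellsF_sel h _ _).1 hc
    refine ⟨c.1, ?_, by rw [h2]⟩
    simp only [cellsF, Finset.mem_filter, Finset.mem_product, Finset.mem_range] at hc
    rw [Finset.mem_filter, Finset.mem_range, h2]
    exact ⟨hc.1.1, hc2⟩

/-- Pairs of cells in the same column correspond to pairs of numbers of the same colour. -/
theorem Bitableau.Compatible.associated_pairs {n : ℕ} {f g : ℕ → ℕ} {R : Type*} [CommRing R]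
    {bt : Bitableau n f g} {col : Fin n → Lab n} (hcol : bt.Compatible col) (y : Fin n → R) :
    Associated
      (∏ q ∈ (Finset.univ : Finset (Fin 2)).sigma (fun s => colPairs n (sel f g s)),
        (y (bt.ent q.1 q.2.1) - y (bt.ent q.1 q.2.2)))
      (∏ p ∈ (Finset.univ : Finset (Fin n × Fin n)).filter
        (fun p => p.1 < p.2 ∧ col p.1 = col p.2), (y p.1 - y p.2)) := by
  have hcell : ∀ s q, q ∈ colPairs n (sel f g s) ↔ q.1 ∈ cellsF n (sel f g s) ∧
      q.2 ∈ cellsF n (sel f g s) ∧ q.1.2 = q.2.2 ∧ q.1.1 < q.2.1 := by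
    intro s q
    simp only [colPairs, Finset.mem_filter, Finset.mem_product, and_assoc]
  refine orient_prod _ _
    (fun q : (Σ _ : Fin 2, (ℕ × ℕ) × (ℕ × ℕ)) => bt.ent q.1 q.2.1)
    (fun q : (Σ _ : Fin 2, (ℕ × ℕ) × (ℕ × ℕ)) => bt.ent q.1 q.2.2)
    (fun p => y p.1 - y p.2) (associated_sub_swap y) ?_ ?_ ?_ ?_
  · rintro ⟨a, b⟩ h
    simp only [Finset.mem_filter, Finset.mem_univ, true_and, Prod.swap] at h ⊢
    exact fun h' => absurd h.1 (not_lt.2 h'.1.le)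
  · rintro ⟨s, c, d⟩ hq
    simp only [Finset.mem_sigma, Finset.mem_univ, true_and, hcell] at hq
    obtain ⟨hc, hd, hcd, hlt⟩ := hq
    obtain ⟨c1, c2⟩ := hcol _ _ hc
    obtain ⟨d1, d2⟩ := hcol _ _ hd
    have hE : col (bt.ent s c) = col (bt.ent s d) :=
      Prod.ext (c1.trans d1.symm) (Fin.ext (c2.trans (hcd.trans d2.symm)))
    have hne : bt.ent s c ≠ bt.ent s d := fun h => by
      rw [(bt.ent_inj hc hd h).2] at hlt
      exact lt_irrefl _ hlt
    simp only [Finset.mem_filter, Finset.mem_univ, true_and, hE, and_true]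
    exact hne.lt_or_gt
  · rintro ⟨s, c, d⟩ hq ⟨s', c', d'⟩ hq' H
    simp only [Finset.mem_sigma, Finset.mem_univ, true_and, hcell] at hq hq'
    rcases H with ⟨h1, h2⟩ | ⟨h1, h2⟩
    · obtain ⟨rfl, rfl⟩ := bt.ent_inj hq.1 hq'.1 h1
      obtain ⟨-, rfl⟩ := bt.ent_inj hq.2.1 hq'.2.1 h2
      rfl
    · obtain ⟨rfl, rfl⟩ := bt.ent_inj hq.1 hq'.2.1 h1
      obtain ⟨-, rfl⟩ := bt.ent_inj hq.2.1 hq'.1 h2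
      exact absurd hq.2.2.2 (not_lt.2 hq'.2.2.2.le)
  · rintro ⟨a, b⟩ h
    simp only [Finset.mem_filter, Finset.mem_univ, true_and] at h
    obtain ⟨s, c, hc, rfl⟩ := bt.exists_ent a
    obtain ⟨s', d, hd, rfl⟩ := bt.exists_ent b
    obtain ⟨c1, c2⟩ := hcol _ _ hc
    obtain ⟨d1, d2⟩ := hcol _ _ hd
    rw [h.2, d1] at c1
    subst c1
    rw [h.2, d2] at c2
    have hne : c.1 ≠ d.1 := fun hcd => by
      rw [Prod.ext hcd c2.symm] at h
      exact lt_irrefl _ h.1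
    rcases hne.lt_or_gt with h' | h'
    · refine ⟨⟨s', c, d⟩, ?_, Or.inl rfl⟩
      simp only [Finset.mem_sigma, Finset.mem_univ, true_and, hcell]
      exact ⟨hc, hd, c2.symm, h'⟩
    · refine ⟨⟨s', d, c⟩, ?_, Or.inr rfl⟩
      simp only [Finset.mem_sigma, Finset.mem_univ, true_and, hcell]
      exact ⟨hd, hc, c2, h'⟩

theorem Bitableau.Compatible.prod_pow {n : ℕ} {f g : ℕ → ℕ} {R : Type*} [CommRing R]
    {bt : Bitableau n f g} {col : Fin n → Lab n} (hcol : bt.Compatible col) (x : Fin n → R) :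
    ∏ c ∈ (Finset.univ : Finset (Fin 2)).sigma (fun s => cellsF n (sel f g s)),
      x (bt.ent c.1 c.2) ^ (c.1 : ℕ) = ∏ s, x s ^ ((col s).1 : ℕ) := by
  refine Finset.prod_bij (fun c _ => bt.ent c.1 c.2) (fun _ _ => Finset.mem_univ _) ?_ ?_ ?_
  · rintro ⟨s, c⟩ hc ⟨s', c'⟩ hc' h
    simp only [Finset.mem_sigma, Finset.mem_univ, true_and] at hc hc'
    obtain ⟨rfl, rfl⟩ := bt.ent_inj hc hc' h
    rfl
  · intro k _
    obtain ⟨s, c, hc, rfl⟩ := bt.exists_ent k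
    exact ⟨⟨s, c⟩, by simpa using hc, rfl⟩
  · rintro ⟨s, c⟩ hc
    simp only [Finset.mem_sigma, Finset.mem_univ, true_and] at hc
    simp only [(hcol _ _ hc).1]

/-- The `B_n`-Specht polynomial of a bitableau is, up to sign, the polynomial of its
colouring. -/
theorem Bitableau.Compatible.associated {n : ℕ} {f g : ℕ → ℕ} (K : Type*) [Field K]
    {bt : Bitableau n f g} {col : Fin n → Lab n} (hcol : bt.Compatible col) :
    Associated (speB n K bt) (colPoly K (fun l : Lab n => (l.1 : ℕ)) col) := by
  have h1 : speB n K bt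
      = (∏ q ∈ (Finset.univ : Finset (Fin 2)).sigma (fun s => colPairs n (sel f g s)),
          (MvPolynomial.X (bt.ent q.1 q.2.1) ^ 2 - MvPolynomial.X (bt.ent q.1 q.2.2) ^ 2)) *
        ∏ c ∈ (Finset.univ : Finset (Fin 2)).sigma (fun s => cellsF n (sel f g s)),
          MvPolynomial.X (bt.ent c.1 c.2) ^ (c.1 : ℕ) := by
    rw [Finset.prod_sigma, Finset.prod_sigma, Fin.prod_univ_two, Fin.prod_univ_two]
    simp [speB, Bitableau.ent, sel]
  rw [h1, colPoly]
  exact (hcol.associated_pairs (fun s => (MvPolynomial.X s : MvPolynomial (Fin n) K) ^ 2)).mul_mul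
    (Associated.of_eq (hcol.prod_pow fun s => (MvPolynomial.X s : MvPolynomial (Fin n) K)))

/-- A colouring whose classes have the column heights of `(f, g)` comes from a bitableau: list
each class down its column. The value on cells outside the diagrams is irrelevant, which is why
`Fin n` has to be nonempty. -/
theorem exists_bitableau {n : ℕ} (hn : 0 < n) {f g : ℕ → ℕ} (h : IsBP n f g)
    (col : Fin n → Lab n) (hcol : hgt col = hgtF n f g) :
    ∃ bt : Bitableau n f g, bt.Compatible col := by
  have hE : ∀ l : Lab n, ∃ e : ℕ → Fin n, (∀ r < hgtF n f g l, col (e r) = l) ∧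
      (∀ r < hgtF n f g l, ∀ r' < hgtF n f g l, e r = e r' → r = r') ∧
      ∀ k, col k = l → ∃ r < hgtF n f g l, e r = k := by
    intro l
    have hc : (Finset.univ.filter (col · = l)).card = hgtF n f g l := by rw [← hcol]; rfl
    let e₀ := Finset.equivFinOfCardEq hc
    refine ⟨fun r => if hr : r < hgtF n f g l then (e₀.symm ⟨r, hr⟩ : Fin n) else ⟨0, hn⟩,
      ?_, ?_, ?_⟩
    · intro r hr
      have := (e₀.symm ⟨r, hr⟩).2
      rw [Finset.mem_filter] at this
      simp only [hr, dif_pos]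
      exact this.2
    · intro r hr r' hr' hrr
      simp only [hr, hr', dif_pos] at hrr
      simpa using e₀.symm.injective (Subtype.ext hrr)
    · intro k hk
      let k' : {x // x ∈ Finset.univ.filter (col · = l)} := ⟨k, by simpa using hk⟩
      refine ⟨e₀ k', (e₀ k').2, ?_⟩
      simp [k']
  choose e he1 he2 he3 using hE
  have hlt : ∀ (s : Fin 2) (c : ℕ × ℕ), c ∈ cellsF n (sel f g s) →
      c.2 < n + 1 ∧ c.1 < hgtF n f g (s, Fin.ofNat (n + 1) c.2) ∧
      ((Fin.ofNat (n + 1) c.2 : Fin (n + 1)) : ℕ) = c.2 := by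
    intro s c hc
    have h1 := (mem_cellsF_sel h s c).1 hc
    have h2 := sel_le h s c.1
    have h3 : ((Fin.ofNat (n + 1) c.2 : Fin (n + 1)) : ℕ) = c.2 := by
      rw [Fin.val_ofNat]; exact Nat.mod_eq_of_lt (by omega)
    refine ⟨by omega, ?_, h3⟩
    rw [hgtF, h3, lt_conjF (isPartitionFun_sel h s)]
    exact h1
  have hcolc : ∀ (s : Fin 2) (c : ℕ × ℕ), c ∈ cellsF n (sel f g s) →
      col (e (s, Fin.ofNat (n + 1) c.2) c.1) = (s, Fin.ofNat (n + 1) c.2) :=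
    fun s c hc => he1 _ _ (hlt s c hc).2.1
  have hinj : ∀ (s s' : Fin 2) (c c' : ℕ × ℕ), c ∈ cellsF n (sel f g s) →
      c' ∈ cellsF n (sel f g s') →
      e (s, Fin.ofNat (n + 1) c.2) c.1 = e (s', Fin.ofNat (n + 1) c'.2) c'.1 →
      s = s' ∧ c = c' := by
    intro s s' c c' hc hc' hcc
    have h1 := hcolc s c hc
    rw [hcc, hcolc s' c' hc'] at h1
    obtain ⟨h1, h2⟩ := Prod.mk.inj h1
    subst h1
    have h3 : c'.2 = c.2 := by
      rw [← (hlt _ c hc).2.2, ← (hlt _ c' hc').2.2, h2]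
    rw [h2] at hcc
    have h4 := (hlt _ c' hc').2.1
    rw [h2] at h4
    exact ⟨rfl, Prod.ext (he2 _ _ (hlt _ c hc).2.1 _ h4 hcc) h3.symm⟩
  have hsurj : ∀ k, ∃ s, ∃ c ∈ cellsF n (sel f g s),
      e (s, Fin.ofNat (n + 1) c.2) c.1 = k := by
    intro k
    obtain ⟨r, hr, hk⟩ := he3 (col k) k rfl
    have h3 : Fin.ofNat (n + 1) ((col k).2 : ℕ) = (col k).2 := by
      apply Fin.ext
      rw [Fin.val_ofNat]
      exact Nat.mod_eq_of_lt (col k).2.2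
    refine ⟨(col k).1, (r, (col k).2), ?_, ?_⟩
    · rw [mem_cellsF_sel h]
      exact (lt_conjF (isPartitionFun_sel h _) _ _).1 hr
    · simp only [h3]
      exact hk
  refine ⟨⟨fun c => e (0, Fin.ofNat (n + 1) c.2) c.1, fun c => e (1, Fin.ofNat (n + 1) c.2) c.1,
    fun k => ?_⟩, ?_⟩
  · obtain ⟨s, c, hc, hk⟩ := hsurj k
    refine ⟨if s = 0 then Sum.inl c else Sum.inr c, ?_, ?_⟩
    · fin_cases s
      · exact ⟨hc, hk⟩
      · exact ⟨hc, hk⟩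
    · rintro (d | d) ⟨hd, hd'⟩
      · obtain ⟨h1, h2⟩ := hinj 0 s d c hd hc (hd'.trans hk.symm)
        subst h1; simp [h2]
      · obtain ⟨h1, h2⟩ := hinj 1 s d c hd hc (hd'.trans hk.symm)
        subst h1; simp [h2]
  · intro s c hc
    have h1 := hcolc s c hc
    have h2 := (hlt s c hc).2.2
    fin_cases s
    · exact ⟨congrArg Prod.fst h1, (congrArg (fun l : Lab n => (l.2 : ℕ)) h1).trans h2⟩
    · exact ⟨congrArg Prod.fst h1, (congrArg (fun l : Lab n => (l.2 : ℕ)) h1).trans h2⟩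

theorem topOf_mod_two {n : ℕ} (h : Lab n → ℕ) (l : Lab n) : topOf h l % 2 = l.1 := by
  have := l.1.2
  unfold topOf; omega

/-- Only the interlaced shape of a colouring matters, since a permutation of the labels that
preserves sides does not change its polynomial. -/
theorem colPoly_mem_spechtIdeal {n : ℕ} (hn : 0 < n) (K : Type*) [Field K] {f g : ℕ → ℕ}
    (h : IsBP n f g) (col : Fin n → Lab n) (hcol : shp (topOf (hgt col)) = interl f g) :
    colPoly K (fun l : Lab n => (l.1 : ℕ)) col ∈ spechtIdeal n K f g := by
  obtain ⟨π, hπ⟩ := exists_perm_of_shp_eq (topOf (hgt col)) (topOf (hgtF n f g))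
    (topOf_mod_two _) (topOf_mod_two _) (hcol.trans (shp_hgtF h).symm)
  have hside : ∀ l, (π l).1 = l.1 := by
    intro l
    apply Fin.ext
    rw [← topOf_mod_two (hgtF n f g) (π l), hπ l, topOf_mod_two]
  have hhgt : hgt (fun s => π (col s)) = hgtF n f g := by
    funext l
    obtain ⟨l, rfl⟩ := π.surjective l
    have h1 := hπ l
    simp only [topOf, hside] at h1
    have h2 : hgt (fun s => π (col s)) (π l) = hgt col l := by
      simp [hgt]
    omega
  have hpoly : colPoly K (fun l : Lab n => (l.1 : ℕ)) (fun s => π (col s))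
      = colPoly K (fun l : Lab n => (l.1 : ℕ)) col := by
    simp [colPoly, hside]
  obtain ⟨bt, hbt⟩ := exists_bitableau hn h _ hhgt
  rw [← hpoly]
  exact (Ideal.mem_iff_of_associated (hbt.associated K)).1 (Ideal.subset_span ⟨bt, rfl⟩)

/-! ### From bidominance to dominance of interlaced sequences -/

theorem sum_interl (f g : ℕ → ℕ) (k : ℕ) :
    ∑ r ∈ Finset.range (2 * k), interl f g r = ∑ j ∈ Finset.range k, (f j + g j) := by
  induction k with
  | zero => rfl
  | succ k ih =>
    rw [show 2 * (k + 1) = 2 * k + 1 + 1 by ring, Finset.sum_range_succ, Finset.sum_range_succ,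
      ih, Finset.sum_range_succ _ k]
    have h1 : interl f g (2 * k) = f k := by simp [interl]
    have h2 : interl f g (2 * k + 1) = g k := by
      simp [interl, show (2 * k + 1) / 2 = k by omega]
    omega

theorem sum_interl_of_le {n : ℕ} {f g : ℕ → ℕ} (h : IsBP n f g) (k : ℕ) (hk : 2 * n ≤ k) :
    ∑ r ∈ Finset.range k, interl f g r = n := by
  rw [← Finset.sum_subset (Finset.range_mono hk), sum_interl, h.2.2]
  intro r _ hr
  rw [Finset.mem_range, not_lt] at hr
  unfold interl
  split_ifs
  · exact h.1.2 _ (by omega)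
  · exact h.2.1.2 _ (by omega)

theorem interl_antitone {n : ℕ} {f g : ℕ → ℕ} (h : IsBP n f g) (k : ℕ) :
    interl f g (k + 2) ≤ interl f g k := by
  unfold interl
  rw [Nat.add_mod_right]
  split_ifs
  · exact h.1.1 (by omega)
  · exact h.2.1.1 (by omega)

end SpechtBn

open SpechtBn in
/-- Proposition 2: bidominance implies inclusion of `B_n`-Specht ideals. -/
theorem spechtIdeal_le_of_bidom {K : Type*} [Field K] [CharZero K] {n : ℕ}
    (p q : Bipartition n) (h : Bidom q p) :
    spechtIdeal n K q.l q.m ≤ spechtIdeal n K p.l p.m := by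
  refine Ideal.span_le.2 ?_
  rintro P ⟨bt, rfl⟩
  -- a bitableau, being total on `ℕ × ℕ`, exists only for positive `n`
  have hn : 0 < n := (bt.left (0, 0)).pos
  obtain ⟨col, hcol⟩ := bt.exists_compatible
  refine (Ideal.mem_iff_of_associated (hcol.associated K)).2 ?_
  have hshp : shp (topOf (hgt col)) = interl q.l q.m := by
    rw [hcol.hgt_eq q.isBP, shp_hgtF q.isBP]
  refine mem_of_dominated _ (interl p.l p.m) (interl_antitone p.isBP)
    (fun col' h' => colPoly_mem_spechtIdeal hn K p.isBP col' h') _ col rfl ?_ ?_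
  · intro k
    rw [hshp]
    obtain ⟨j, rfl | rfl⟩ := Nat.even_or_odd' k
    · rw [sum_interl, sum_interl]; exact h.1 j
    · rw [Finset.sum_range_succ, Finset.sum_range_succ, sum_interl, sum_interl]
      simpa [interl] using h.2 j
  · refine ⟨2 * n, fun k hk => ?_⟩
    rw [hshp, sum_interl_of_le q.isBP k hk, sum_interl_of_le p.isBP k hk]
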